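/- For all integers p ≥ q ≥ 3 and k ≥ 1, the following identity of polynomials in x holds: φ(L(D_{p,k,q});x) = ((x−3)·φ(U_{p−1};x) − 2·φ(U_{p−2};x) − 2·(−1)^p)·φ(L_{q,k};x) − φ(U_{p−1};x)·φ(L_{q,k−1};x). -/

import Mathlib

/-!
Up to the sign of its off-diagonal entries, `xI - L(D_{p,k,q})` consists of two diagonal blocks
coupled only by the edge joining vertex `0` of `C_p` to the first path vertex `u_1`.

* `det_fromBlocks_bridge`: for two blocks joined by one bridge, `det = det A · det D - det A' · det D'`,
  where `A'` and `D'` are obtained by deleting the ends of the bridge. This is the Schur complement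
  formula, after passing to the fraction field of `ℚ[x]`, where the characteristic matrix `A` is
  invertible. Here `D` belongs to `L_{q,k}`, `D'` to `L_{q,k-1}` and `A'` to `U_{p-1}`.
* `charpoly_cycleBlock`: the block of `C_p` is `U_{p-1}` bordered by the row and column of vertex `0`,
  which has nonzero entries only at the two ends of the path. By Cauchy's expansion
  (`det_border`) only the four corner entries of the adjugate of `xI - U_{p-1}` contribute: the
  two diagonal corners are `φ(U_{p-2})` and the other two, being minors of triangular shape, are
  `(-1)^(p-2)`.

What remains is the entrywise identification of the blocks of the Laplacian, for which the degrees
of all vertices are computed.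
-/


open Polynomial Matrix SimpleGraph
open scoped Classical

/-- The matrix `U_n`: tridiagonal, 2 on the diagonal, -1 on the sub/super-diagonal. -/
def Umatrix (R : Type*) [Ring R] (n : ℕ) : Matrix (Fin n) (Fin n) R :=
  Matrix.of fun i j =>
    if (i : ℕ) = (j : ℕ) then 2
    else if (i : ℕ) + 1 = (j : ℕ) ∨ (j : ℕ) + 1 = (i : ℕ) then -1 else 0

/-- Auxiliary relation for the dumbbell graph `D_{p,k,q}` on vertices `0,…,p+q+k-1`:
vertices `0,…,p-1` form the cycle `C_p`, vertices `p,…,p+q-1` form the cycle `C_q`, and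
vertices `p+q,…,p+q+k-1` are the internal vertices of the connecting path (in order),
with vertex `0` of `C_p` and vertex `p` of `C_q` being its endpoints. -/
def dumbbellRel (p k q : ℕ) (a b : ℕ) : Prop :=
  (b = a + 1 ∧ b < p) ∨
  (a = 0 ∧ b = p - 1) ∨
  (p ≤ a ∧ b = a + 1 ∧ b < p + q) ∨
  (a = p ∧ b = p + q - 1) ∨
  (p + q ≤ a ∧ b = a + 1 ∧ b < p + q + k) ∨
  (if k = 0 then a = 0 ∧ b = p
   else (a = 0 ∧ b = p + q) ∨ (a = p ∧ b = p + q + k - 1))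

/-- The dumbbell graph `D_{p,k,q}` on `p + q + k` vertices. -/
def dumbbellGraph (p k q : ℕ) : SimpleGraph (Fin (p + q + k)) :=
  SimpleGraph.fromRel (fun a b => dumbbellRel p k q (a : ℕ) (b : ℕ))

/-- One path of a theta graph: endpoints `0` and `v`, with `m` internal vertices
`L, L+1, …, L+m-1` (in order); if `m = 0` the path is the single edge `0v`. -/
def thetaBlockRel (v L m : ℕ) (a b : ℕ) : Prop :=
  if m = 0 then a = 0 ∧ b = v
  else (a = 0 ∧ b = L) ∨ (L ≤ a ∧ b = a + 1 ∧ b < L + m) ∨ (a = L + m - 1 ∧ b = v)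

/-- The theta graph `Θ_{r,s,t}` on `r + s + t + 2` vertices: the degree-3 vertices are
`u = 0` and `v = r+s+t+1`, joined by three internally disjoint paths with `r`, `s`, `t`
internal vertices respectively. -/
def thetaGraph (r s t : ℕ) : SimpleGraph (Fin (r + s + t + 2)) :=
  SimpleGraph.fromRel (fun a b =>
    thetaBlockRel (r + s + t + 1) 1 r (a : ℕ) (b : ℕ) ∨
    thetaBlockRel (r + s + t + 1) (r + 1) s (a : ℕ) (b : ℕ) ∨
    thetaBlockRel (r + s + t + 1) (r + s + 1) t (a : ℕ) (b : ℕ))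

/-- The matrix `L_{q,k}`: the principal submatrix of the Laplacian matrix of a dumbbell
graph `D_{p,k,q}` obtained by deleting the rows and columns of the `p` vertices of `C_p`.
Indices `0,…,k-1` are the path vertices `u_1,…,u_k` and indices `k,…,k+q-1` are the cycle
vertices `w_1,…,w_q`. -/
def dumbbellMinor (R : Type*) [Ring R] (q k : ℕ) : Matrix (Fin (q + k)) (Fin (q + k)) R :=
  Matrix.of fun a b =>
    if (a : ℕ) = (b : ℕ) then (if (a : ℕ) = k then 3 else 2)
    else if (a : ℕ) + 1 = (b : ℕ) ∨ (b : ℕ) + 1 = (a : ℕ) ∨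
            ((a : ℕ) = k ∧ (b : ℕ) = k + q - 1) ∨ ((a : ℕ) = k + q - 1 ∧ (b : ℕ) = k)
    then -1 else 0

/-- The matrix `θ_{r,s,t}`: the principal submatrix of the Laplacian matrix of the theta
graph `Θ_{r,s,t}` obtained by deleting the row and column of the degree-3 vertex `u = 0`. -/
noncomputable def thetaMinor (r s t : ℕ) :
    Matrix (Fin (r + s + t + 1)) (Fin (r + s + t + 1)) ℚ :=
  ((thetaGraph r s t).lapMatrix ℚ).submatrix (fun i => i.succ) (fun i => i.succ)

/-- The number of spanning trees of a graph. -/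
noncomputable def spanningTreeCount {V : Type*} (G : SimpleGraph V) : ℕ :=
  Nat.card {H : G.Subgraph // H.verts = Set.univ ∧ H.coe.IsTree}

/-! ### Bridges and borders in determinants -/

section Determinants

variable {m n : Type*} [Fintype m] [Fintype n] [DecidableEq m] [DecidableEq n]

/-- The matrix changes in row `j` only, so the determinant is affine in `t`. -/
lemma det_sub_single {R : Type*} [CommRing R] (D : Matrix n n R) (j : n) (t : R) :
    (D - single j j t).det = D.det - t * D.adjugate j j := by
  have h : D - single j j t = D.updateRow j (D j + (-t) • Pi.single j 1) := by
    ext a b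
    by_cases ha : a = j
    · subst ha
      by_cases hb : b = a
      · subst hb; simp [sub_eq_add_neg]
      · simp [hb, Ne.symm hb]
    · simp [ha, Ne.symm ha]
  rw [h, det_updateRow_add, det_updateRow_smul, updateRow_eq_self, adjugate_apply]
  ring

lemma det_fromBlocks_bridge_of_field {K : Type*} [Field K] (A : Matrix m m K) (D : Matrix n n K)
    (hA : A.det ≠ 0) (i : m) (j : n) :
    (fromBlocks A (single i j 1) (single j i 1) D).det =
      A.det * D.det - A.adjugate i i * D.adjugate j j := by
  have : Invertible A := A.invertibleOfIsUnitDet hA.isUnit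
  rw [det_fromBlocks₁₁, single_mul_mul_single, det_sub_single, invOf_eq_nonsing_inv, inv_def]
  simp only [Ring.inverse_eq_inv', Matrix.smul_apply, smul_eq_mul, one_mul, mul_one]
  field_simp

/-- Two blocks joined by a single bridge edge `i — j`: the determinant of the whole matrix is the
product of the determinants of the blocks, minus the product of the minors in which the end
vertices of the bridge are deleted. -/
lemma det_fromBlocks_bridge {R : Type*} [CommRing R] [IsDomain R] (A : Matrix m m R)
    (D : Matrix n n R) (hA : A.det ≠ 0) (i : m) (j : n) :
    (fromBlocks A (single i j 1) (single j i 1) D).det =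
      A.det * D.det - A.adjugate i i * D.adjugate j j := by
  let f := algebraMap R (FractionRing R)
  have hf : Function.Injective f := IsFractionRing.injective R (FractionRing R)
  have hA' : (f.mapMatrix A).det ≠ 0 := by
    rw [← RingHom.map_det]
    exact fun h => hA (hf (by rw [h, map_zero]))
  have key := det_fromBlocks_bridge_of_field (f.mapMatrix A) (f.mapMatrix D) hA' i j
  apply hf
  rw [map_sub, map_mul, map_mul, RingHom.map_det, RingHom.map_det, RingHom.map_det]
  rw [← RingHom.map_adjugate, ← RingHom.map_adjugate] at key
  simp only [RingHom.mapMatrix_apply, map_apply, fromBlocks_map, map_single, map_one] at key ⊢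
  exact key

lemma det_border_of_field {K : Type*} [Field K] (a : K) (r c : n → K) (D : Matrix n n K)
    (hD : D.det ≠ 0) :
    (fromBlocks (of fun _ _ : Unit => a) (replicateRow Unit r) (replicateCol Unit c) D).det =
      a * D.det - r ⬝ᵥ (D.adjugate *ᵥ c) := by
  have : Invertible D := D.invertibleOfIsUnitDet hD.isUnit
  rw [det_fromBlocks₂₂, det_unique (n := Unit), invOf_eq_nonsing_inv, inv_def, Ring.inverse_eq_inv',
    Matrix.mul_smul, Matrix.smul_mul, Matrix.mul_assoc, ← replicateCol_mulVec,
    Matrix.sub_apply, Matrix.smul_apply, replicateRow_mul_replicateCol_apply]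
  simp only [of_apply, smul_eq_mul]
  field_simp

/-- Cauchy's expansion of a bordered determinant. -/
lemma det_border {R : Type*} [CommRing R] [IsDomain R] (a : R) (r c : n → R) (D : Matrix n n R)
    (hD : D.det ≠ 0) :
    (fromBlocks (of fun _ _ : Unit => a) (replicateRow Unit r) (replicateCol Unit c) D).det =
      a * D.det - r ⬝ᵥ (D.adjugate *ᵥ c) := by
  let f := algebraMap R (FractionRing R)
  have hf : Function.Injective f := IsFractionRing.injective R (FractionRing R)
  have hD' : (f.mapMatrix D).det ≠ 0 := by
    rw [← RingHom.map_det]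
    exact fun h => hD (hf (by rw [h, map_zero]))
  have key := det_border_of_field (f a) (f ∘ r) (f ∘ c) (f.mapMatrix D) hD'
  apply hf
  rw [map_sub, map_mul, RingHom.map_det, RingHom.map_det, RingHom.map_dotProduct,
    ← RingHom.map_adjugate] at *
  have h2 : (f ∘ (D.adjugate *ᵥ c)) = f.mapMatrix D.adjugate *ᵥ (f ∘ c) := by
    funext i; exact RingHom.map_mulVec f _ _ i
  rw [h2, ← key]
  congr 1
  ext (i | i) (j | j) <;> simp

end Determinants

/-! ### Path and cycle blocks -/

/-- The block of the Laplacian of the dumbbell graph on the vertices of `C_{m+1}`: the Laplacian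
of the cycle, with the diagonal entry at vertex `0` raised to `3` by the edge leaving the cycle. -/
def cycleBlock (m : ℕ) : Matrix (Fin (m + 1)) (Fin (m + 1)) ℚ :=
  Matrix.of fun a b =>
    if (a : ℕ) = (b : ℕ) then (if (a : ℕ) = 0 then 3 else 2)
    else if (a : ℕ) + 1 = (b : ℕ) ∨ (b : ℕ) + 1 = (a : ℕ) ∨
            ((a : ℕ) = 0 ∧ (b : ℕ) = m) ∨ ((a : ℕ) = m ∧ (b : ℕ) = 0)
    then -1 else 0

lemma charmatrix_submatrix_of_injective {R m n : Type*} [CommRing R] [DecidableEq m]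
    [DecidableEq n] [Fintype m] [Fintype n] (M : Matrix n n R) {f : m → n}
    (hf : Function.Injective f) :
    (charmatrix M).submatrix f f = charmatrix (M.submatrix f f) := by
  ext i j : 2
  simp [charmatrix_apply, diagonal_apply, hf.eq_iff]

lemma adjugate_charmatrix_zero {n : ℕ} (M : Matrix (Fin (n + 1)) (Fin (n + 1)) ℚ) :
    (charmatrix M).adjugate 0 0 = (M.submatrix Fin.succ Fin.succ).charpoly := by
  rw [adjugate_fin_succ_eq_det_submatrix, charpoly,
    ← charmatrix_submatrix_of_injective M (Fin.succ_injective _)]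
  simp

lemma cycleBlock_submatrix (m : ℕ) :
    (cycleBlock m).submatrix Fin.succ Fin.succ = Umatrix ℚ m := by
  ext a b
  have := a.isLt
  have := b.isLt
  simp only [cycleBlock, Umatrix, submatrix_apply, of_apply, Fin.val_succ,
    Nat.add_eq_zero_iff, one_ne_zero, and_false, false_and, or_false, if_false]
  split_ifs <;> first | rfl | omega

lemma dumbbellMinor_submatrix (q l : ℕ) :
    (dumbbellMinor ℚ q (l + 1)).submatrix (Fin.succ : Fin (q + l) → Fin (q + (l + 1))) Fin.succ =
      dumbbellMinor ℚ q l := by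
  ext a b
  have := a.isLt
  have := b.isLt
  simp only [dumbbellMinor, submatrix_apply, of_apply, Fin.val_succ]
  split_ifs <;> first | rfl | omega

lemma adjugate_path_zero_zero (n : ℕ) :
    (charmatrix (Umatrix ℚ (n + 1))).adjugate 0 0 = (Umatrix ℚ n).charpoly := by
  rw [adjugate_charmatrix_zero]
  congr 1
  ext a b
  simp [Umatrix]

lemma adjugate_path_last_last (n : ℕ) :
    (charmatrix (Umatrix ℚ (n + 1))).adjugate (Fin.last n) (Fin.last n) =
      (Umatrix ℚ n).charpoly := by
  have h : (Umatrix ℚ (n + 1)).submatrix Fin.castSucc Fin.castSucc = Umatrix ℚ n := by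
    ext a b
    simp [Umatrix]
  rw [adjugate_fin_succ_eq_det_submatrix, charpoly, ← h,
    ← charmatrix_submatrix_of_injective _ (Fin.castSucc_injective _)]
  simp [← two_mul]

/-- The minor is lower triangular, with the superdiagonal of the path matrix on its diagonal. -/
lemma adjugate_path_zero_last (n : ℕ) :
    (charmatrix (Umatrix ℚ (n + 1))).adjugate 0 (Fin.last n) = (-1) ^ n := by
  rw [adjugate_fin_succ_eq_det_submatrix, det_of_isLowerTriangular]
  · rw [Finset.prod_eq_one]
    · simp
    · intro i _
      have : i.castSucc ≠ i.succ := (Fin.castSucc_lt_succ).ne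
      simp [charmatrix_apply_ne _ _ _ this, Umatrix]
  · intro i j hij
    have hij : i < j := hij
    have hij' : (i : ℕ) < j := hij
    have : i.castSucc ≠ j.succ := by
      intro h
      have := congrArg Fin.val h
      simp at this
      omega
    simp only [submatrix_apply, Fin.succAbove_last, Fin.succAbove_zero,
      charmatrix_apply_ne _ _ _ this, Umatrix, of_apply, Fin.val_castSucc, Fin.val_succ]
    rw [if_neg (by omega), if_neg (by omega)]
    simp

lemma adjugate_path_last_zero (n : ℕ) :
    (charmatrix (Umatrix ℚ (n + 1))).adjugate (Fin.last n) 0 = (-1) ^ n := by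
  have h : (Umatrix ℚ (n + 1))ᵀ = Umatrix ℚ (n + 1) := by
    ext a b
    simp only [Umatrix, transpose_apply, of_apply]
    split_ifs <;> first | rfl | omega
  rw [← adjugate_path_zero_last n]
  conv_lhs => rw [← h, charmatrix_transpose, ← adjugate_transpose]
  rfl

/-- Splits vertex `0` off `Fin (n + 1)`. -/
def unitSumFin (n : ℕ) : Unit ⊕ Fin n ≃ Fin (n + 1) where
  toFun := Sum.elim (fun _ => 0) Fin.succ
  invFun := Fin.cases (Sum.inl ()) Sum.inr
  left_inv := by rintro (_ | i) <;> simp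
  right_inv := by intro i; cases i using Fin.cases <;> simp

/-- Here `m = n + 1`, so the cycle has `n + 2` vertices. For `n = 0` both ends of the path would
coincide: the border entry is then `1`, while the formula would need `2`. -/
lemma charpoly_cycleBlock (n : ℕ) (hn : 1 ≤ n) :
    (cycleBlock (n + 1)).charpoly =
      (X - 3) * (Umatrix ℚ (n + 1)).charpoly - 2 * (Umatrix ℚ n).charpoly
        - 2 * (-1 : ℚ[X]) ^ n := by
  -- the border: vertex `0` is adjacent to the two ends of the path on the other vertices
  let r : Fin (n + 1) → ℚ[X] := Pi.single 0 1 + Pi.single (Fin.last n) 1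
  have hr : ∀ i : Fin (n + 1), r i = if (i : ℕ) = 0 ∨ (i : ℕ) = n then 1 else 0 := by
    intro i
    have h0 : i = 0 ↔ (i : ℕ) = 0 := Fin.ext_iff
    have hl : i = Fin.last n ↔ (i : ℕ) = n := Fin.ext_iff
    simp only [r, Pi.add_apply, Pi.single_apply, h0, hl]
    split_ifs <;> first | omega | simp
  have hblock : (charmatrix (cycleBlock (n + 1))).submatrix (unitSumFin _) (unitSumFin _) =
      fromBlocks (of fun _ _ : Unit => (X - 3 : ℚ[X])) (replicateRow Unit r)
        (replicateCol Unit r) (charmatrix (Umatrix ℚ (n + 1))) := by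
    rw [← cycleBlock_submatrix (n + 1),
      ← charmatrix_submatrix_of_injective _ (Fin.succ_injective _)]
    ext1 (i | i) (j | j)
    · simp only [unitSumFin, submatrix_apply, Equiv.coe_fn_mk, Sum.elim_inl, charmatrix_apply_eq,
        cycleBlock, of_apply, fromBlocks_apply₁₁, if_true, Fin.val_zero]
      rfl
    · change charmatrix _ 0 j.succ = r j
      have hj : cycleBlock (n + 1) 0 j.succ = if (j : ℕ) = 0 ∨ (j : ℕ) = n then -1 else 0 := by
        simp only [cycleBlock, of_apply, Fin.val_zero, Fin.val_succ]
        grind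
      rw [charmatrix_apply_ne _ _ _ (Fin.succ_ne_zero _).symm, hr, hj]
      split_ifs <;> simp
    · change charmatrix _ i.succ 0 = r i
      have hi : cycleBlock (n + 1) i.succ 0 = if (i : ℕ) = 0 ∨ (i : ℕ) = n then -1 else 0 := by
        simp only [cycleBlock, of_apply, Fin.val_zero, Fin.val_succ]
        grind
      rw [charmatrix_apply_ne _ _ _ (Fin.succ_ne_zero _), hr, hi]
      split_ifs <;> simp
    · rfl
  rw [charpoly, ← det_submatrix_equiv_self (unitSumFin _), hblock,
    det_border _ _ _ _ (charpoly_monic _).ne_zero]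
  simp only [r, mulVec_add, dotProduct_add, add_dotProduct, single_one_dotProduct,
    mulVec_single_one, col_apply, adjugate_path_zero_zero, adjugate_path_last_last,
    adjugate_path_zero_last, adjugate_path_last_zero, charpoly]
  ring

/-! ### The Laplacian of the dumbbell graph -/

lemma dumbbell_adj (p k q : ℕ) (a b : Fin (p + q + k)) :
    (dumbbellGraph p k q).Adj a b ↔
      (a : ℕ) ≠ b ∧ (dumbbellRel p k q a b ∨ dumbbellRel p k q b a) := by
  simp [dumbbellGraph, Fin.ext_iff]

lemma degree_eq_two {n : ℕ} (G : SimpleGraph (Fin n)) (v : Fin n) (a b : ℕ) (ha : a < n)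
    (hb : b < n) (hab : a ≠ b) (h : ∀ j : Fin n, G.Adj v j ↔ (j : ℕ) = a ∨ (j : ℕ) = b) :
    G.degree v = 2 := by
  have : G.neighborFinset v = {⟨a, ha⟩, ⟨b, hb⟩} := by
    ext j
    simp [h, Fin.ext_iff]
  rw [← card_neighborFinset_eq_degree, this, Finset.card_pair (by simpa using hab)]

lemma degree_eq_three {n : ℕ} (G : SimpleGraph (Fin n)) (v : Fin n) (a b c : ℕ) (ha : a < n)
    (hb : b < n) (hc : c < n) (hab : a ≠ b) (hac : a ≠ c) (hbc : b ≠ c)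
    (h : ∀ j : Fin n, G.Adj v j ↔ (j : ℕ) = a ∨ (j : ℕ) = b ∨ (j : ℕ) = c) :
    G.degree v = 3 := by
  have : G.neighborFinset v = {⟨a, ha⟩, ⟨b, hb⟩, ⟨c, hc⟩} := by
    ext j
    simp [h, Fin.ext_iff]
  rw [← card_neighborFinset_eq_degree, this, Finset.card_eq_three.mpr]
  exact ⟨_, _, _, by simpa using hab, by simpa using hac, by simpa using hbc, rfl⟩

lemma dumbbell_degree (p k q : ℕ) (hp : 3 ≤ p) (hq : 3 ≤ q) (hk : 1 ≤ k)
    (v : Fin (p + q + k)) :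
    (dumbbellGraph p k q).degree v = if (v : ℕ) = 0 ∨ (v : ℕ) = p then 3 else 2 := by
  obtain ⟨v, hv⟩ := v
  have hk0 : k ≠ 0 := by omega
  by_cases h0 : v = 0
  · rw [if_pos (Or.inl h0)]
    apply degree_eq_three _ _ 1 (p - 1) (p + q) <;> try omega
    intro j
    have := j.isLt
    simp only [dumbbell_adj, dumbbellRel, if_neg hk0]
    constructor
    · rintro ⟨hne, (h | h | h | h | h | h | h) | (h | h | h | h | h | h | h)⟩ <;> omega
    · rintro (h | h | h) <;> refine ⟨by omega, ?_⟩ <;> grind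
  by_cases h1 : v = p
  · rw [if_pos (Or.inr h1)]
    apply degree_eq_three _ _ (p + 1) (p + q - 1) (p + q + k - 1) <;> try omega
    intro j
    have := j.isLt
    simp only [dumbbell_adj, dumbbellRel, if_neg hk0]
    constructor
    · rintro ⟨hne, (h | h | h | h | h | h | h) | (h | h | h | h | h | h | h)⟩ <;> omega
    · rintro (h | h | h) <;> refine ⟨by omega, ?_⟩ <;> grind
  rw [if_neg (by simp only; omega)]
  -- the two neighbours are `v - 1` and `v + 1`, except where a cycle or the path closes up
  apply degree_eq_two _ _ (if v = p + q then 0 else v - 1)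
    (if v = p - 1 then 0 else if v = p + q - 1 then p else if v = p + q + k - 1 then p else v + 1)
  · split_ifs <;> omega
  · split_ifs <;> omega
  · split_ifs <;> omega
  · intro j
    have := j.isLt
    simp only [dumbbell_adj, dumbbellRel, if_neg hk0]
    constructor
    · rintro ⟨hne, (h | h | h | h | h | h | h) | (h | h | h | h | h | h | h)⟩ <;> split_ifs <;> omega
    · rintro (h | h) <;> refine ⟨by split_ifs at h <;> omega, ?_⟩ <;> split_ifs at h <;> grind

lemma dumbbell_lapMatrix_apply (p k q : ℕ) (hp : 3 ≤ p) (hq : 3 ≤ q) (hk : 1 ≤ k)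
    (a b : Fin (p + q + k)) :
    (dumbbellGraph p k q).lapMatrix ℚ a b =
      if (a : ℕ) = b then (if (a : ℕ) = 0 ∨ (a : ℕ) = p then 3 else 2)
      else if dumbbellRel p k q a b ∨ dumbbellRel p k q b a then -1 else 0 := by
  rw [lapMatrix, Matrix.sub_apply, degMatrix, adjMatrix_apply, dumbbell_adj]
  by_cases h : a = b
  · subst h
    rw [diagonal_apply_eq, dumbbell_degree p k q hp hq hk]
    simp
  · have h' : (a : ℕ) ≠ b := fun h' => h (Fin.ext h')
    rw [diagonal_apply_ne _ h]
    simp only [h', ne_eq, not_false_eq_true, true_and, if_false]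
    split_ifs <;> simp

/-- Lists the vertices of the dumbbell graph as those of `C_p` followed by those of the remaining
part, the latter in the order of `dumbbellMinor`: path first, then `C_q`. -/
def dumbbellIndex (p k q : ℕ) : Fin p ⊕ Fin (q + k) → Fin (p + q + k) :=
  Sum.elim (fun i => ⟨i, by omega⟩)
    (fun j => ⟨if (j : ℕ) < k then p + q + j else p + (j - k), by split_ifs <;> omega⟩)

lemma dumbbellIndex_bijective (p k q : ℕ) : Function.Bijective (dumbbellIndex p k q) := by
  rw [Fintype.bijective_iff_injective_and_card]
  constructor
  · rintro (i | i) (j | j) h <;> have h := congrArg Fin.val h <;>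
      simp only [dumbbellIndex, Sum.elim_inl, Sum.elim_inr] at h
    · exact congrArg _ (Fin.ext h)
    · split_ifs at h <;> omega
    · split_ifs at h <;> omega
    · refine congrArg _ (Fin.ext ?_)
      split_ifs at h <;> omega
  · simp [add_assoc]

lemma dumbbell_lapMatrix_submatrix (m l q : ℕ) (hm : 2 ≤ m) (hq : 3 ≤ q) :
    ((dumbbellGraph (m + 1) (l + 1) q).lapMatrix ℚ).submatrix
        (dumbbellIndex (m + 1) (l + 1) q) (dumbbellIndex (m + 1) (l + 1) q) =
      fromBlocks (cycleBlock m) (single 0 (0 : Fin (q + l + 1)) (-1))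
        (single (0 : Fin (q + l + 1)) 0 (-1)) (dumbbellMinor ℚ q (l + 1)) := by
  have hk0 : l + 1 ≠ 0 := by omega
  ext (i | i) (j | j) <;> have hi := i.isLt <;> have hj := j.isLt <;>
    simp only [submatrix_apply, dumbbell_lapMatrix_apply (m + 1) (l + 1) q (by omega) hq (by omega),
      dumbbellIndex, Sum.elim_inl, Sum.elim_inr, fromBlocks_apply₁₁, fromBlocks_apply₁₂,
      fromBlocks_apply₂₁, fromBlocks_apply₂₂, cycleBlock, dumbbellMinor, of_apply, single_apply,
      dumbbellRel, if_neg hk0, Fin.ext_iff, Fin.val_zero]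
  · refine if_congr Iff.rfl (if_congr (by omega) rfl rfl) (if_congr ?_ rfl rfl)
    constructor
    · rintro ((h | h | h | h | h | h | h) | (h | h | h | h | h | h | h)) <;> omega
    · rintro (h | h | h | h) <;> grind
  · rw [if_neg (by split_ifs <;> omega)]
    refine if_congr ?_ rfl rfl
    constructor
    · rintro ((h | h | h | h | h | h | h) | (h | h | h | h | h | h | h)) <;> split_ifs at h <;> omega
    · grind
  · rw [if_neg (by split_ifs <;> omega)]
    refine if_congr ?_ rfl rfl
    constructor
    · rintro ((h | h | h | h | h | h | h) | (h | h | h | h | h | h | h)) <;> split_ifs at h <;> omega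
    · grind
  · refine if_congr (by split_ifs <;> omega) (if_congr (by split_ifs <;> omega) rfl rfl)
      (if_congr ?_ rfl rfl)
    constructor
    · rintro ((h | h | h | h | h | h | h) | (h | h | h | h | h | h | h)) <;> split_ifs at h <;> omega
    · rintro (h | h | h | h) <;> split_ifs <;> grind

/-- `φ(L(D_{p,k,q})) = ((x−3)φ(U_{p−1}) − 2φ(U_{p−2}) − 2(−1)^p)·φ(L_{q,k}) − φ(U_{p−1})·φ(L_{q,k−1})`. -/
theorem charpoly_lapMatrix_dumbbell (p k q : ℕ) (hq : 3 ≤ q) (hqp : q ≤ p) (hk : 1 ≤ k) :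
    ((dumbbellGraph p k q).lapMatrix ℚ).charpoly =
      ((X - 3) * (Umatrix ℚ (p - 1)).charpoly - 2 * (Umatrix ℚ (p - 2)).charpoly
          - 2 * (-1 : ℚ[X]) ^ p) * (dumbbellMinor ℚ q k).charpoly
        - (Umatrix ℚ (p - 1)).charpoly * (dumbbellMinor ℚ q (k - 1)).charpoly := by
  obtain ⟨n, rfl⟩ : ∃ n, p = n + 1 + 1 := ⟨p - 2, by omega⟩
  obtain ⟨l, rfl⟩ : ∃ l, k = l + 1 := ⟨k - 1, by omega⟩
  let e := Equiv.ofBijective _ (dumbbellIndex_bijective (n + 1 + 1) (l + 1) q)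
  have h := dumbbell_lapMatrix_submatrix (n + 1) l q (by omega) hq
  -- deleting the first path vertex from `L_{q,l+1}` leaves `L_{q,l}`
  have hD : (charmatrix (dumbbellMinor ℚ q (l + 1))).adjugate (0 : Fin (q + l + 1)) 0 =
      (dumbbellMinor ℚ q l).charpoly := by
    refine Eq.trans ?_ (congrArg charpoly (dumbbellMinor_submatrix q l))
    exact adjugate_charmatrix_zero (n := q + l) _
  have hs : ∀ {α β : Type} [DecidableEq α] [DecidableEq β] (i : α) (j : β),
      -(single i j (-1 : ℚ)).map C = single i j (1 : ℚ[X]) := by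
    intro α β _ _ i j
    ext1 a b
    by_cases hab : i = a ∧ j = b <;> simp [hab]
  have key := det_fromBlocks_bridge (charmatrix (cycleBlock (n + 1)))
    (charmatrix (dumbbellMinor ℚ q (l + 1))) (charpoly_monic _).ne_zero 0 (0 : Fin (q + l + 1))
  rw [hD, adjugate_charmatrix_zero, cycleBlock_submatrix] at key
  have he : ((dumbbellGraph (n + 1 + 1) (l + 1) q).lapMatrix ℚ).charpoly =
      (fromBlocks (cycleBlock (n + 1)) (single 0 (0 : Fin (q + l + 1)) (-1))
        (single (0 : Fin (q + l + 1)) 0 (-1)) (dumbbellMinor ℚ q (l + 1))).charpoly := by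
    rw [← h, ← charpoly_reindex e.symm]
    rfl
  rw [he, charpoly, charmatrix_fromBlocks, hs, hs]
  refine key.trans ?_
  change (cycleBlock (n + 1)).charpoly * (dumbbellMinor ℚ q (l + 1)).charpoly - _ = _
  rw [charpoly_cycleBlock n (by omega)]
  change _ = ((X - 3) * (Umatrix ℚ (n + 1)).charpoly - 2 * (Umatrix ℚ n).charpoly
      - 2 * (-1 : ℚ[X]) ^ (n + 1 + 1)) * (dumbbellMinor ℚ q (l + 1)).charpoly
    - (Umatrix ℚ (n + 1)).charpoly * (dumbbellMinor ℚ q l).charpoly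
  ring
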